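/- Let A be an n×n real symmetric matrix and let A* be the (n−1)×(n−1) principal submatrix of A obtained by deleting one row and the column of the same index. If λ₁ ≥ λ₂ ≥ … ≥ λ_n are the eigenvalues of A listed in decreasing order and μ₁ ≥ μ₂ ≥ … ≥ μ_{n−1} are the eigenvalues of A* listed in decreasing order, then λ_i ≥ μ_i ≥ λ_{i+1} for every i = 1, …, n−1. -/

import Mathlib

open Polynomial

open scoped RealInnerProductSpace Matrix

/-- Two antitone real sequences with the same monic polynomial of roots coincide. -/
theorem Antitone.eq_of_prod_X_sub_C_eq {n : ℕ} {f g : Fin n → ℝ} (hf : Antitone f)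
    (hg : Antitone g) (h : ∏ i, (X - C (f i)) = ∏ i, (X - C (g i))) : f = g := by
  have roots_eq (u : Fin n → ℝ) : (∏ i, (X - C (u i))).roots = ↑(List.ofFn u) := by
    rw [Polynomial.roots_prod _ _ (by simp [Finset.prod_ne_zero_iff, X_sub_C_ne_zero])]
    simp [Fin.univ_val_map]
  have hperm : (List.ofFn f).Perm (List.ofFn g) := by
    rw [← Multiset.coe_eq_coe, ← roots_eq, ← roots_eq, h]
  exact List.ofFn_injective (hperm.eq_of_sortedGE hf.sortedGE_ofFn hg.sortedGE_ofFn)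

/-- A real symmetric matrix whose eigenvalues are listed decreasingly by `lam` has its quadratic
form diagonalized, with diagonal coefficients `lam`, by an orthonormal basis. -/
theorem Matrix.IsSymm.exists_orthonormalBasis_dotProduct_mulVec {n : ℕ}
    {A : Matrix (Fin n) (Fin n) ℝ} (hA : A.IsSymm) {lam : Fin n → ℝ} (hlam : Antitone lam)
    (hchar : A.charpoly = ∏ i, (X - C (lam i))) :
    ∃ b : OrthonormalBasis (Fin n) ℝ (EuclideanSpace ℝ (Fin n)),
      ∀ x : EuclideanSpace ℝ (Fin n), x.ofLp ⬝ᵥ (A *ᵥ x.ofLp) = ∑ i, lam i * ⟪b i, x⟫ ^ 2 := by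
  have hT : (Matrix.toEuclideanLin A).IsSymmetric :=
    Matrix.isSymmetric_toEuclideanLin_iff.mpr (by simpa [Matrix.IsHermitian] using hA.eq)
  have hn : Module.finrank ℝ (EuclideanSpace ℝ (Fin n)) = n := finrank_euclideanSpace_fin
  have heig : hT.eigenvalues hn = lam := by
    refine (hT.eigenvalues_antitone hn).eq_of_prod_X_sub_C_eq hlam ?_
    rw [← hchar]
    have := hT.charpoly_eq hn
    simp only [RCLike.ofReal_real_eq_id, id] at this
    rw [← this]
    exact Matrix.charpoly_toLin A (PiLp.basisFun 2 ℝ (Fin n))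
  refine ⟨hT.eigenvectorBasis hn, fun x => ?_⟩
  have hinner : x.ofLp ⬝ᵥ (A *ᵥ x.ofLp) = ⟪Matrix.toEuclideanLin A x, x⟫ := by
    simp [EuclideanSpace.inner_eq_star_dotProduct, Matrix.toLpLin_apply]
  rw [hinner, ← (hT.eigenvectorBasis hn).sum_inner_mul_inner]
  refine Finset.sum_congr rfl fun i _ => ?_
  rw [hT, hT.apply_eigenvectorBasis, heig, inner_smul_right, real_inner_comm]
  simp only [RCLike.ofReal_real_eq_id, id]
  ring

/-- Two diagonalized quadratic forms, the second the restriction of the first along an isometry: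
discarding fewer coefficients than the dimension of the smaller space, every lower bound for the
remaining coefficients of the second is at most every upper bound for those of the first. -/
theorem le_of_sum_mul_inner_sq_eq {ι κ V W : Type*} [Fintype ι] [Fintype κ]
    [NormedAddCommGroup V] [InnerProductSpace ℝ V] [NormedAddCommGroup W] [InnerProductSpace ℝ W]
    (b : OrthonormalBasis ι ℝ V) (c : OrthonormalBasis κ ℝ W) (E : W →ₗᵢ[ℝ] V)
    {lam : ι → ℝ} {mu : κ → ℝ}
    (hE : ∀ y, ∑ i, lam i * ⟪b i, E y⟫ ^ 2 = ∑ j, mu j * ⟪c j, y⟫ ^ 2)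
    {S : Finset ι} {T : Finset κ} (hcard : S.card + T.card < Fintype.card κ) {l m : ℝ}
    (hS : ∀ i ∉ S, lam i ≤ l) (hT : ∀ j ∉ T, m ≤ mu j) : m ≤ l := by
  have : FiniteDimensional ℝ W := c.toBasis.finiteDimensional_of_finite
  let F : W →ₗ[ℝ] (S → ℝ) × (T → ℝ) :=
    (LinearMap.pi fun i : S => (innerₛₗ ℝ (b i)).comp E.toLinearMap).prod
      (LinearMap.pi fun j : T => innerₛₗ ℝ (c j))
  have hF : LinearMap.ker F ≠ ⊥ := LinearMap.ker_ne_bot_of_finrank_lt <| by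
    simpa [Module.finrank_eq_card_basis c.toBasis] using hcard
  obtain ⟨y, hy, hy0⟩ := (Submodule.ne_bot_iff _).mp hF
  obtain ⟨hyS, hyT⟩ : (∀ i ∈ S, ⟪b i, E y⟫ = 0) ∧ ∀ j ∈ T, ⟪c j, y⟫ = 0 := by
    simpa [F, funext_iff] using hy
  have hle : m * ‖y‖ ^ 2 ≤ l * ‖y‖ ^ 2 := by
    calc m * ‖y‖ ^ 2 = ∑ j, m * ⟪c j, y⟫ ^ 2 := by rw [← Finset.mul_sum, c.sum_sq_inner_right]
      _ ≤ ∑ j, mu j * ⟪c j, y⟫ ^ 2 := by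
        refine Finset.sum_le_sum fun j _ => ?_
        by_cases hj : j ∈ T
        · simp [hyT j hj]
        · exact mul_le_mul_of_nonneg_right (hT j hj) (sq_nonneg _)
      _ = ∑ i, lam i * ⟪b i, E y⟫ ^ 2 := (hE y).symm
      _ ≤ ∑ i, l * ⟪b i, E y⟫ ^ 2 := by
        refine Finset.sum_le_sum fun i _ => ?_
        by_cases hi : i ∈ S
        · simp [hyS i hi]
        · exact mul_le_mul_of_nonneg_right (hS i hi) (sq_nonneg _)
      _ = l * ‖y‖ ^ 2 := by rw [← Finset.mul_sum, b.sum_sq_inner_right, E.norm_map]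
  exact le_of_mul_le_mul_right hle (by positivity)

/-- The isometric embedding of Euclidean spaces inserting a zero coordinate at position `i₀`. -/
noncomputable def EuclideanSpace.insertZero {n : ℕ} (i₀ : Fin (n + 1)) :
    EuclideanSpace ℝ (Fin n) →ₗᵢ[ℝ] EuclideanSpace ℝ (Fin (n + 1)) where
  toFun y := WithLp.toLp 2 (i₀.insertNth (α := fun _ => ℝ) 0 y.ofLp)
  map_add' x y := by
    ext k
    cases k using i₀.succAboveCases <;> simp
  map_smul' r y := by
    ext k
    cases k using i₀.succAboveCases <;> simp
  norm_map' y := by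
    simp [EuclideanSpace.norm_eq, Fin.sum_univ_succAbove _ i₀]

theorem EuclideanSpace.dotProduct_mulVec_insertZero {n : ℕ}
    (A : Matrix (Fin (n + 1)) (Fin (n + 1)) ℝ) (i₀ : Fin (n + 1)) (y : EuclideanSpace ℝ (Fin n)) :
    (insertZero i₀ y).ofLp ⬝ᵥ (A *ᵥ (insertZero i₀ y).ofLp) =
      y.ofLp ⬝ᵥ (A.submatrix i₀.succAbove i₀.succAbove *ᵥ y.ofLp) := by
  simp [insertZero, dotProduct, Matrix.mulVec, Fin.sum_univ_succAbove _ i₀]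

/-- **Cauchy eigenvalue interlacing theorem.** If `A` is a real symmetric
`(n+1) × (n+1)` matrix, `A*` is the principal submatrix obtained by deleting the row and
column of index `i₀`, and `lam`, `mu` are the decreasing lists of eigenvalues
(with multiplicity, i.e. the roots of the characteristic polynomials) of `A` and `A*`
respectively, then `lam i ≥ mu i ≥ lam (i+1)` for every `i`. -/
theorem cauchy_eigenvalue_interlacing {n : ℕ}
    (A : Matrix (Fin (n + 1)) (Fin (n + 1)) ℝ) (hA : A.IsSymm) (i₀ : Fin (n + 1))
    (lam : Fin (n + 1) → ℝ) (mu : Fin n → ℝ)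
    (hlam : Antitone lam) (hmu : Antitone mu)
    (hAchar : A.charpoly = ∏ i, (X - C (lam i)))
    (hBchar : (A.submatrix i₀.succAbove i₀.succAbove).charpoly = ∏ i, (X - C (mu i))) :
    ∀ i : Fin n, lam i.succ ≤ mu i ∧ mu i ≤ lam i.castSucc := by
  intro i
  obtain ⟨b, hb⟩ := hA.exists_orthonormalBasis_dotProduct_mulVec hlam hAchar
  obtain ⟨c, hc⟩ :=
    (hA.submatrix i₀.succAbove).exists_orthonormalBasis_dotProduct_mulVec hmu hBchar
  have hE (y : EuclideanSpace ℝ (Fin n)) :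
      ∑ k, lam k * ⟪b k, EuclideanSpace.insertZero i₀ y⟫ ^ 2 = ∑ j, mu j * ⟪c j, y⟫ ^ 2 := by
    rw [← hb, ← hc, EuclideanSpace.dotProduct_mulVec_insertZero]
  constructor
  · rw [← neg_le_neg_iff]
    refine le_of_sum_mul_inner_sq_eq b c (EuclideanSpace.insertZero i₀)
      (lam := fun k => -lam k) (mu := fun j => -mu j) (S := Finset.Ioi i.succ)
      (T := Finset.Iio i) (by simpa using hE) ?_ ?_ ?_
    · simp only [Fin.card_Ioi, Fin.card_Iio, Fintype.card_fin, Fin.val_succ]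
      omega
    · exact fun k hk => neg_le_neg (hlam (by simpa using hk))
    · exact fun j hj => neg_le_neg (hmu (by simpa using hj))
  · refine le_of_sum_mul_inner_sq_eq b c (EuclideanSpace.insertZero i₀) hE
      (S := Finset.Iio i.castSucc) (T := Finset.Ioi i) ?_ ?_ ?_
    · simp only [Fin.card_Ioi, Fin.card_Iio, Fintype.card_fin, Fin.val_castSucc]
      omega
    · exact fun k hk => hlam (by simpa using hk)
    · exact fun j hj => hmu (by simpa using hj)
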